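/- Let A(d) denote the number of sequences of admissible pairs for the all-pluses sign pattern of length d+1, and let h_{d,m} denote the number of such SAPs whose first pair is (pos_0, neg_0) = (0, m). Then for every even integer d ≥ 4 one has h_{d,0} = h_{d,2} = A(d−1), and for every odd integer d ≥ 5 one has h_{d,1} = A(d−1) and 2·h_{d,3} > A(d−1). -/

import Mathlib

open Polynomial

/-- Number of sign changes among consecutive entries `s 0, …, s n`. -/
def signChanges (s : ℕ → ℤ) (n : ℕ) : ℕ :=
  ((Finset.range n).filter (fun i => s i * s (i + 1) < 0)).card

/-- Number of sign preservations among consecutive entries `s 0, …, s n`. -/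
def signPres (s : ℕ → ℤ) (n : ℕ) : ℕ :=
  ((Finset.range n).filter (fun i => 0 < s i * s (i + 1))).card

/-- `s` encodes a sign pattern of length `d+1` (entries `s 0, …, s d`, each `±1`,
first entry `+1`). -/
def IsSignPattern (d : ℕ) (s : ℕ → ℤ) : Prop :=
  s 0 = 1 ∧ ∀ i ≤ d, s i = 1 ∨ s i = -1

/-- `pn k = (pos_k, neg_k)`, `k = 0, …, d-1`, is a sequence of admissible pairs (SAP)
for the sign pattern `s` of length `d+1`: each pair is admissible for the truncated
pattern `σ_k` (of length `d+1-k`, with sign changes `signChanges s (d-k)` and sign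
preservations `signPres s (d-k)`), the last entry of `σ_k` is `(-1)^{pos_k}`, and the
Rolle-type inequalities and parity condition hold between consecutive pairs. -/
def IsSAP (d : ℕ) (s : ℕ → ℤ) (pn : ℕ → ℕ × ℕ) : Prop :=
  (∀ k < d,
    (pn k).1 ≤ signChanges s (d - k) ∧
    Even ((signChanges s (d - k) : ℤ) - (pn k).1) ∧
    (pn k).2 ≤ signPres s (d - k) ∧
    Even ((signPres s (d - k) : ℤ) - (pn k).2) ∧
    s (d - k) = (-1) ^ (pn k).1) ∧
  (∀ k, k + 1 < d →
    (pn k).1 ≤ (pn (k + 1)).1 + 1 ∧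
    (pn k).2 ≤ (pn (k + 1)).2 + 1 ∧
    (pn k).1 + (pn k).2 ≤ (pn (k + 1)).1 + (pn (k + 1)).2 + 1 ∧
    Even (((pn (k + 1)).1 : ℤ) + (pn (k + 1)).2 + 3 - (pn k).1 - (pn k).2))

/-- The `k`-th derivative of a real polynomial. -/
noncomputable def iterDeriv : ℕ → Polynomial ℝ → Polynomial ℝ
  | 0, P => P
  | k + 1, P => Polynomial.derivative (iterDeriv k P)

/-- `P` has exactly `pos` positive real roots and exactly `neg` negative real roots,
all of them simple. -/
def CountRoots (P : Polynomial ℝ) (pos neg : ℕ) : Prop :=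
  {x : ℝ | 0 < x ∧ P.eval x = 0}.ncard = pos ∧
  {x : ℝ | x < 0 ∧ P.eval x = 0}.ncard = neg ∧
  ∀ x : ℝ, P.eval x = 0 → (Polynomial.derivative P).eval x ≠ 0

/-- The couple (sign pattern `s`, SAP `pn`) of degree `d` is realizable: there is a
monic real polynomial of degree `d`, with all coefficients nonzero, whose coefficient
signs define the pattern `s` (the sign of the coefficient of `x^(d-i)` is `s i`), and
such that for `k = 0, …, d-1` the `k`-th derivative has exactly `(pn k).1` positive and
`(pn k).2` negative real roots, all simple. -/
def Realizable (d : ℕ) (s : ℕ → ℤ) (pn : ℕ → ℕ × ℕ) : Prop :=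
  ∃ P : Polynomial ℝ, P.Monic ∧ P.natDegree = d ∧
    (∀ j ≤ d, P.coeff j ≠ 0) ∧
    (∀ i ≤ d, 0 < (s i : ℝ) * P.coeff (d - i)) ∧
    ∀ k < d, CountRoots (iterDeriv k P) (pn k).1 (pn k).2

/-- The all-pluses sign pattern. -/
def allPlus : ℕ → ℤ := fun _ => 1

/-- Extend a finite sequence of pairs to `ℕ` (by `(0,0)` beyond `d`). -/
def extendPN (d : ℕ) (pn : Fin d → ℕ × ℕ) : ℕ → ℕ × ℕ :=
  fun k => if hk : k < d then pn ⟨k, hk⟩ else (0, 0)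

/-- `A d` is the number of SAPs for the all-pluses sign pattern of length `d+1`. -/
noncomputable def A (d : ℕ) : ℕ :=
  {pn : Fin d → ℕ × ℕ | IsSAP d allPlus (extendPN d pn)}.ncard

/-- `hNum d m` is the number of SAPs for the all-pluses sign pattern of length `d+1`
whose first pair is `(0, m)`. -/
noncomputable def hNum (d m : ℕ) : ℕ :=
  {pn : Fin d → ℕ × ℕ |
    IsSAP d allPlus (extendPN d pn) ∧ extendPN d pn 0 = (0, m)}.ncard


theorem signChanges_allPlus (n : ℕ) : signChanges allPlus n = 0 := by
  simp [signChanges, allPlus]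

theorem signPres_allPlus (n : ℕ) : signPres allPlus n = n := by
  simp [signPres, allPlus]

theorem isSAP_iff (d : ℕ) (f : ℕ → ℕ × ℕ) : IsSAP d allPlus f ↔
    (∀ k < d, (f k).1 = 0 ∧ (f k).2 ≤ d - k ∧ (d - k) % 2 = (f k).2 % 2) ∧
    (∀ k, k + 1 < d → (f k).2 ≤ (f (k + 1)).2 + 1) := by
  unfold IsSAP
  simp only [signChanges_allPlus, signPres_allPlus, Int.even_iff]
  constructor
  · rintro ⟨h1, h2⟩
    refine ⟨fun k hk => ?_, fun k hk => ?_⟩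
    · obtain ⟨a, b, c, e, g⟩ := h1 k hk
      omega
    · exact (h2 k hk).2.1
  · rintro ⟨h1, h2⟩
    refine ⟨fun k hk => ?_, fun k hk => ?_⟩
    · obtain ⟨a, b, c⟩ := h1 k hk
      refine ⟨by omega, by omega, by omega, by omega, ?_⟩
      rw [a]; rfl
    · obtain ⟨a, b, c⟩ := h1 k (by omega)
      obtain ⟨a', b', c'⟩ := h1 (k + 1) hk
      have := h2 k hk
      refine ⟨by omega, by omega, by omega, by omega⟩

theorem isSAP_succ (d : ℕ) (hd : 1 ≤ d) (f : ℕ → ℕ × ℕ) : IsSAP (d + 1) allPlus f ↔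
    ((f 0).1 = 0 ∧ (f 0).2 ≤ d + 1 ∧ (d + 1) % 2 = (f 0).2 % 2 ∧ (f 0).2 ≤ (f 1).2 + 1) ∧
    IsSAP d allPlus (fun k => f (k + 1)) := by
  rw [isSAP_iff, isSAP_iff]
  constructor
  · rintro ⟨h1, h2⟩
    refine ⟨?_, fun k hk => ?_, fun k hk => ?_⟩
    · obtain ⟨a, b, c⟩ := h1 0 (by omega)
      exact ⟨a, b, c, h2 0 (by omega)⟩
    · have := h1 (k + 1) (by omega)
      simpa using this
    · exact h2 (k + 1) (by omega)
  · rintro ⟨h0, h1, h2⟩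
    refine ⟨fun k hk => ?_, fun k hk => ?_⟩
    · rcases k with _ | k
      · exact ⟨h0.1, h0.2.1, h0.2.2.1⟩
      · have := h1 k (by omega)
        simpa using this
    · rcases k with _ | k
      · exact h0.2.2.2
      · exact h2 k (by omega)

theorem extend_zero (d : ℕ) (q : Fin (d + 1) → ℕ × ℕ) : extendPN (d + 1) q 0 = q 0 := by
  simp [extendPN]

theorem extend_succ (d : ℕ) (q : Fin (d + 1) → ℕ × ℕ) (k : ℕ) :
    extendPN (d + 1) q (k + 1) = extendPN d (Fin.tail q) k := by
  simp [extendPN, Fin.tail, Fin.succ]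

def SS (d : ℕ) : Set (Fin d → ℕ × ℕ) := {pn | IsSAP d allPlus (extendPN d pn)}

def TT (d m : ℕ) : Set (Fin d → ℕ × ℕ) := {pn | pn ∈ SS d ∧ m ≤ (extendPN d pn 0).2 + 1}

theorem SS_finite (d : ℕ) : (SS d).Finite := by
  refine (Set.finite_Iic (fun _ : Fin d => ((0, d) : ℕ × ℕ))).subset ?_
  intro pn h i
  have := ((isSAP_iff _ _).1 h).1 i i.2
  simp only [extendPN, i.2, dif_pos, Fin.eta] at this
  exact ⟨by simpa using this.1.le, by simp only; omega⟩

theorem hNum_succ (d m : ℕ) (hd : 1 ≤ d) (hm : m ≤ d + 1) (hp : (d + 1) % 2 = m % 2) :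
    hNum (d + 1) m = (TT d m).ncard := by
  unfold hNum
  have hinj : Function.Injective
      (fun q : Fin d → ℕ × ℕ => (Fin.cons ((0, m) : ℕ × ℕ) q : Fin (d + 1) → ℕ × ℕ)) :=
    Fin.cons_right_injective (α := fun _ => ℕ × ℕ) _
  rw [← Set.ncard_image_of_injective (TT d m) hinj]
  congr 1
  ext pn
  simp only [Set.mem_setOf_eq, Set.mem_image, TT, SS]
  constructor
  · rintro ⟨h, h0⟩
    refine ⟨Fin.tail pn, ?_, ?_⟩
    · rw [isSAP_succ d hd] at h
      have h1 := extend_succ d pn 0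
      simp only [zero_add] at h1
      simp only [extend_succ, h0, h1] at h
      exact ⟨h.2, h.1.2.2.2⟩
    · rw [extend_zero] at h0
      rw [← h0]; exact Fin.cons_self_tail pn
  · rintro ⟨q, ⟨h, h0⟩, rfl⟩
    rw [isSAP_succ d hd]
    have h1 := extend_succ d (Fin.cons ((0, m) : ℕ × ℕ) q) 0
    simp only [zero_add, Fin.tail_cons] at h1
    simp only [extend_succ, extend_zero, Fin.cons_zero, Fin.tail_cons, h1]
    exact ⟨⟨⟨trivial, hm, hp, h0⟩, h⟩, trivial⟩

theorem SS_zero {d : ℕ} (hd : 1 ≤ d) {pn : Fin d → ℕ × ℕ} (h : pn ∈ SS d) :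
    (extendPN d pn 0).1 = 0 ∧ d % 2 = (extendPN d pn 0).2 % 2 := by
  have := ((isSAP_iff _ _).1 h).1 0 hd
  simp only [Nat.sub_zero] at this
  exact ⟨this.1, this.2.2⟩

theorem TT_eq (d m : ℕ) (hd : 1 ≤ d) (h : m ≤ 1 ∨ (m = 2 ∧ d % 2 = 1)) :
    (TT d m).ncard = A d := by
  unfold A
  congr 1
  ext pn
  refine ⟨fun h => h.1, fun h' => ⟨h', ?_⟩⟩
  have := SS_zero hd h'
  omega

theorem even_part (d : ℕ) (hd : 4 ≤ d) (he : Even d) :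
    hNum d 0 = hNum d 2 ∧ hNum d 2 = A (d - 1) := by
  rw [Nat.even_iff] at he
  obtain ⟨e, rfl⟩ : ∃ e, d = e + 1 := ⟨d - 1, by omega⟩
  rw [hNum_succ e 0 (by omega) (by omega) (by omega),
    hNum_succ e 2 (by omega) (by omega) (by omega), Nat.add_sub_cancel,
    TT_eq e 0 (by omega) (by omega), TT_eq e 2 (by omega) (by omega)]
  exact ⟨rfl, rfl⟩

theorem A_split (e : ℕ) (he : 1 ≤ e) (hp : e % 2 = 0) :
    A e = hNum e 0 + (TT e 3).ncard := by
  have hf : (TT e 3).Finite := (SS_finite e).subset fun _ h => h.1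
  unfold A hNum
  rw [← Set.ncard_union_eq ?_ ((SS_finite e).subset fun _ h => h.1) hf]
  · congr 1
    ext pn
    constructor
    · intro h
      have h0 := SS_zero he h
      by_cases h3 : 3 ≤ (extendPN e pn 0).2 + 1
      · exact Or.inr ⟨h, h3⟩
      · exact Or.inl ⟨h, Prod.ext h0.1 (by simp only; omega)⟩
    · rintro (h | h)
      · exact h.1
      · exact h.1
  · rw [Set.disjoint_left]
    rintro pn ⟨_, h0⟩ ⟨_, h3⟩
    rw [h0] at h3
    simp at h3

theorem lt_part (e : ℕ) (he : 4 ≤ e) : hNum e 2 < (TT e 3).ncard := by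
  have hf : (TT e 3).Finite := (SS_finite e).subset fun _ h => h.1
  unfold hNum
  refine Set.ncard_lt_ncard ?_ hf
  have hx : ∀ k < e, extendPN e (fun k => (0, e - k)) k = (0, e - k) := by
    intro k hk
    simp [extendPN, hk]
  rw [Set.ssubset_iff_of_subset]
  · refine ⟨fun k => (0, e - k), ⟨?_, ?_⟩, ?_⟩
    · refine (isSAP_iff _ _).2 ⟨fun k hk => ?_, fun k hk => ?_⟩
      · rw [hx k hk]; simp
      · rw [hx k (by omega), hx (k + 1) hk]; simp only; omega
    · rw [hx 0 (by omega)]; simp only; omega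
    · rintro ⟨_, h⟩
      rw [hx 0 (by omega), Prod.ext_iff] at h
      simp only at h
      omega
  · rintro pn ⟨h, h0⟩
    refine ⟨h, ?_⟩
    rw [h0]

/-- For even `d ≥ 4`, `hNum d 0 = hNum d 2 = A (d-1)`; for odd `d ≥ 5`,
`hNum d 1 = A (d-1)` and `2 hNum d 3 > A (d-1)`. -/
theorem stmt15 :
    (∀ d : ℕ, 4 ≤ d → Even d → hNum d 0 = hNum d 2 ∧ hNum d 2 = A (d - 1)) ∧
    (∀ d : ℕ, 5 ≤ d → Odd d → hNum d 1 = A (d - 1) ∧ A (d - 1) < 2 * hNum d 3) := by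
  refine ⟨even_part, fun d hd ho => ?_⟩
  rw [Nat.odd_iff] at ho
  obtain ⟨e, rfl⟩ : ∃ e, d = e + 1 := ⟨d - 1, by omega⟩
  rw [hNum_succ e 1 (by omega) (by omega) (by omega),
    hNum_succ e 3 (by omega) (by omega) (by omega), Nat.add_sub_cancel,
    TT_eq e 1 (by omega) (by omega)]
  refine ⟨rfl, ?_⟩
  have h1 := A_split e (by omega) (by omega)
  have h2 := lt_part e (by omega)
  have h3 := (even_part e (by omega) (Nat.even_iff.2 (by omega))).1
  omega
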